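/- For the continued fraction system associated to a finite alphabet A ⊂ ℕ with |A| ≥ 2, there exist r > 0 and 0 < κ < 1 such that for every z in the closed upper half-plane ℍ ∪ ℝ with Euclidean distance d_E(z, I) < r, and for every j = (a,a') ∈ A×A, the Möbius image satisfies d_E(γ_j(z), I) ≤ κ · d_E(z, I). -/

import Mathlib

/-- The Möbius map of `g_a = [[0,1],[1,a]]` on `ℝ`: `x ↦ 1/(x+a)`. -/
noncomputable def gmap (a : ℕ) (x : ℝ) : ℝ := 1 / (x + (a : ℝ))

/-- The Möbius map `γ_j` of `g_a g_{a'}` for `j = (a,a')`: `x ↦ g_a(g_{a'}(x))`. -/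
noncomputable def gam (j : ℕ × ℕ) (x : ℝ) : ℝ := gmap j.1 (gmap j.2 x)

/-- The interval `I_j = γ_j([1/(A_max+1), 1])`, where `A_max = max A` (here `A.sup id`). -/
noncomputable def Ij (A : Finset ℕ) (j : ℕ × ℕ) : Set ℝ :=
  gam j '' Set.Icc (1 / (((A.sup id : ℕ) : ℝ) + 1)) 1

/-- `I = ⋃_{j ∈ A×A} I_j`. -/
noncomputable def IA (A : Finset ℕ) : Set ℝ :=
  ⋃ j ∈ (A ×ˢ A : Finset (ℕ × ℕ)), Ij A j

open Classical in
/-- The expanding Markov map `T : I → ℝ`, given on `I_j`, `j = (a,a')`, by the inverse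
branch `T = γ_j⁻¹ : x ↦ 1/(1/x − a) − a'` (and defined as `0` off `I`). -/
noncomputable def Tmap (A : Finset ℕ) (x : ℝ) : ℝ :=
  if h : ∃ j : ℕ × ℕ, j ∈ A ×ˢ A ∧ x ∈ Ij A j then
    1 / (1 / x - (h.choose.1 : ℝ)) - (h.choose.2 : ℝ)
  else 0

/-- The invariant Cantor set `K = ⋂_{i ≥ 0} T^{−i}(I)`. -/
noncomputable def KA (A : Finset ℕ) : Set ℝ :=
  ⋂ n : ℕ, (Tmap A)^[n] ⁻¹' IA A

open Classical in
/-- The distortion function `τ = log |T'|`. On `I_j`, `j = (a,a')`, the branch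
`T = γ_j⁻¹` has `T'(x) = (1 − a x)⁻²`, so `τ(x) = log|T'(x)| = −2 log|1 − a x|`
(and `τ = 0` off `I`). -/
noncomputable def tauA (A : Finset ℕ) (x : ℝ) : ℝ :=
  if h : ∃ j : ℕ × ℕ, j ∈ A ×ˢ A ∧ x ∈ Ij A j then
    -2 * Real.log |1 - (h.choose.1 : ℝ) * x|
  else 0

open Classical in
/-- `|T'|`: on `I_j`, `j = (a,a')`, the branch derivative of `T = γ_j⁻¹` in absolute
value, `|T'(x)| = (1 − a x)⁻²` (and `0` off `I`), so that by the chain rule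
`|(T^N)'(z)| = ∏_{i<N} |T'(T^i z)|`. -/
noncomputable def TderivAbs (A : Finset ℕ) (x : ℝ) : ℝ :=
  if h : ∃ j : ℕ × ℕ, j ∈ A ×ˢ A ∧ x ∈ Ij A j then
    ((1 - (h.choose.1 : ℝ) * x)⁻¹) ^ 2
  else 0

/-- The Möbius map of `g_a` on the closed upper half-plane: `z ↦ 1/(z+a)`. -/
noncomputable def gmapC (a : ℕ) (z : ℂ) : ℂ := 1 / (z + (a : ℂ))

/-- The Möbius map `γ_j` of `g_a g_{a'}` on the closed upper half-plane for `j = (a,a')`. -/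
noncomputable def gamC (j : ℕ × ℕ) (z : ℂ) : ℂ := gmapC j.1 (gmapC j.2 z)

/-- `I` viewed as a subset of `ℂ`. -/
noncomputable def IAC (A : Finset ℕ) : Set ℂ := (fun x : ℝ => (x : ℂ)) '' IA A

/-!
Writing `γ_j(z) = (z + a') / D(z)` with `D(z) = a (z + a') + 1`, the determinant being `1` gives
`γ_j(z) - γ_j(w) = (z - w) / (D(z) D(w))`. Every letter is at least `1`, so `|D(z)| ≥ Re z + 2`
when `Re z ≥ -1`. Points of `I` are positive reals, hence `|D| ≥ 2` on `I` and `|D| ≥ 1` within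
distance `1` of `I`. Since `γ_j` maps `I` into itself, comparing `z` with almost nearest points
of `I` yields the contraction with `r = 1` and `κ = 1/2`.
-/

open Set Filter Topology Metric in
theorem infDist_map_le_mul_infDist {α β : Type*} [PseudoMetricSpace α] [PseudoMetricSpace β]
    {f : α → β} {s : Set α} {t : Set β} {z : α} {r κ : ℝ} (hs : s.Nonempty) (hf : MapsTo f s t)
    (hz : infDist z s < r) (hdist : ∀ w ∈ s, dist z w < r → dist (f z) (f w) ≤ κ * dist z w) :
    infDist (f z) t ≤ κ * infDist z s := by
  have approx : ∃ᶠ d in 𝓝 (infDist z s), d ∈ dist z '' s :=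
    (isGLB_infDist hs).frequently_nhds_mem (hs.image _)
  have tendsto_mul : Tendsto (κ * ·) (𝓝 (infDist z s)) (𝓝 (κ * infDist z s)) :=
    tendsto_id.const_mul κ
  refine ge_of_tendsto_of_frequently tendsto_mul ?_
  refine (approx.and_eventually (eventually_lt_nhds hz)).mono ?_
  rintro _ ⟨⟨w, hw, rfl⟩, hwr⟩
  exact (infDist_le_dist_of_mem (hf hw)).trans (hdist w hw hwr)

theorem gmap_mapsTo_Icc {a M : ℕ} (ha : 1 ≤ a) (haM : a ≤ M) :
    Set.MapsTo (gmap a) (Set.Icc 0 1) (Set.Icc (1 / ((M : ℝ) + 1)) 1) := by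
  rintro x ⟨hx0, hx1⟩
  have one_le : (1 : ℝ) ≤ a := by exact_mod_cast ha
  have le_M : (a : ℝ) ≤ M := by exact_mod_cast haM
  exact ⟨one_div_le_one_div_of_le (by linarith) (by linarith),
    div_le_one_of_le₀ (by linarith) (by linarith)⟩

theorem gam_mapsTo_Icc {j : ℕ × ℕ} {M : ℕ} (h₁ : 1 ≤ j.1) (h₁M : j.1 ≤ M) (h₂ : 1 ≤ j.2) :
    Set.MapsTo (gam j) (Set.Icc 0 1) (Set.Icc (1 / ((M : ℝ) + 1)) 1) := fun _ hx ↦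
  gmap_mapsTo_Icc h₁ h₁M <|
    Set.Icc_subset_Icc_left (by positivity) (gmap_mapsTo_Icc h₂ le_rfl hx)

theorem IA_subset_Icc {A : Finset ℕ} (hA1 : ∀ a ∈ A, 1 ≤ a) :
    IA A ⊆ Set.Icc (1 / (((A.sup id : ℕ) : ℝ) + 1)) 1 := by
  refine Set.iUnion₂_subset fun j hj ↦ Set.MapsTo.image_subset ?_
  obtain ⟨hj₁, hj₂⟩ := Finset.mem_product.mp hj
  exact (gam_mapsTo_Icc (hA1 _ hj₁) (Finset.le_sup (f := id) hj₁) (hA1 _ hj₂)).mono_left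
    (Set.Icc_subset_Icc_left (by positivity))

theorem gam_mapsTo_IA {A : Finset ℕ} (hA1 : ∀ a ∈ A, 1 ≤ a) {j : ℕ × ℕ} (hj : j ∈ A ×ˢ A) :
    Set.MapsTo (gam j) (IA A) (IA A) := fun _ hx ↦
  Set.mem_biUnion hj (Set.mem_image_of_mem (gam j) (IA_subset_Icc hA1 hx))

theorem gamC_ofReal (j : ℕ × ℕ) (x : ℝ) : gamC j x = gam j x := by
  simp [gamC, gam, gmap, gmapC]

theorem gamC_mapsTo_IAC {A : Finset ℕ} (hA1 : ∀ a ∈ A, 1 ≤ a) {j : ℕ × ℕ} (hj : j ∈ A ×ˢ A) :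
    Set.MapsTo (gamC j) (IAC A) (IAC A) := by
  rintro _ ⟨x, hx, rfl⟩
  exact ⟨gam j x, gam_mapsTo_IA hA1 hj hx, (gamC_ofReal j x).symm⟩

theorem re_nonneg_of_mem_IAC {A : Finset ℕ} (hA1 : ∀ a ∈ A, 1 ≤ a) {w : ℂ} (hw : w ∈ IAC A) :
    0 ≤ w.re := by
  obtain ⟨x, hx, rfl⟩ := hw
  exact le_trans (by positivity) (IA_subset_Icc hA1 hx).1

/-- The automorphy factor `c z + d` of the matrix `g_a g_{a'} = [[1, a'], [a, a a' + 1]]`,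
`j = (a, a')`: the denominator of `γ_j` as a fractional linear map. -/
def gamDenom (j : ℕ × ℕ) (z : ℂ) : ℂ := j.1 * (z + j.2) + 1

theorem gamC_eq_div_gamDenom {j : ℕ × ℕ} {z : ℂ} (hz : z + j.2 ≠ 0) :
    gamC j z = (z + j.2) / gamDenom j z := by
  have denom_eq : 1 / (z + j.2) + j.1 = gamDenom j z / (z + j.2) := by
    rw [gamDenom]
    field_simp
    ring
  rw [gamC, gmapC, gmapC, denom_eq, one_div_div]

theorem gamC_sub_gamC {j : ℕ × ℕ} {z w : ℂ} (hz : z + j.2 ≠ 0) (hw : w + j.2 ≠ 0)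
    (hDz : gamDenom j z ≠ 0) (hDw : gamDenom j w ≠ 0) :
    gamC j z - gamC j w = (z - w) / (gamDenom j z * gamDenom j w) := by
  rw [gamC_eq_div_gamDenom hz, gamC_eq_div_gamDenom hw, div_sub_div _ _ hDz hDw]
  congr 1
  simp only [gamDenom]
  ring

theorem add_natCast_ne_zero_of_neg_lt_re {a : ℕ} {z : ℂ} (hz : -(a : ℝ) < z.re) :
    z + a ≠ 0 := by
  refine Complex.ne_zero_of_re_pos ?_
  rw [Complex.add_re, Complex.natCast_re]
  linarith

theorem re_add_two_le_norm_gamDenom {j : ℕ × ℕ} (h₁ : 1 ≤ j.1) (h₂ : 1 ≤ j.2) {z : ℂ}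
    (hz : -1 ≤ z.re) : z.re + 2 ≤ ‖gamDenom j z‖ := by
  have one_le₁ : (1 : ℝ) ≤ j.1 := by exact_mod_cast h₁
  have one_le₂ : (1 : ℝ) ≤ j.2 := by exact_mod_cast h₂
  calc z.re + 2 ≤ (z.re + j.2) + 1 := by linarith
    _ ≤ j.1 * (z.re + j.2) + 1 := by
      gcongr
      exact le_mul_of_one_le_left (by linarith) one_le₁
    _ = (gamDenom j z).re := by simp [gamDenom]
    _ ≤ ‖gamDenom j z‖ := Complex.re_le_norm _

theorem dist_gamC_le_div {j : ℕ × ℕ} (h₁ : 1 ≤ j.1) (h₂ : 1 ≤ j.2) {z w : ℂ}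
    (hz : -1 < z.re) (hw : -1 < w.re) :
    dist (gamC j z) (gamC j w) ≤ dist z w / ((z.re + 2) * (w.re + 2)) := by
  have neg_le : -(j.2 : ℝ) ≤ -1 := neg_le_neg (by exact_mod_cast h₂)
  have norm_z := re_add_two_le_norm_gamDenom h₁ h₂ hz.le
  have norm_w := re_add_two_le_norm_gamDenom h₁ h₂ hw.le
  have z_pos : 0 < z.re + 2 := by linarith
  have w_pos : 0 < w.re + 2 := by linarith
  rw [dist_eq_norm, dist_eq_norm,
    gamC_sub_gamC (add_natCast_ne_zero_of_neg_lt_re (neg_le.trans_lt hz))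
      (add_natCast_ne_zero_of_neg_lt_re (neg_le.trans_lt hw))
      (norm_pos_iff.mp (z_pos.trans_le norm_z)) (norm_pos_iff.mp (w_pos.trans_le norm_w)),
    norm_div, norm_mul]
  gcongr

theorem dist_gamC_le_half {j : ℕ × ℕ} (h₁ : 1 ≤ j.1) (h₂ : 1 ≤ j.2) {z w : ℂ}
    (hw : 0 ≤ w.re) (hzw : dist z w < 1) :
    dist (gamC j z) (gamC j w) ≤ 1 / 2 * dist z w := by
  have re_sub_le : w.re - z.re ≤ dist z w := by
    rw [dist_comm, dist_eq_norm, ← Complex.sub_re]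
    exact Complex.re_le_norm _
  have hz : -1 < z.re := by linarith
  have two_le : 2 ≤ (z.re + 2) * (w.re + 2) := by nlinarith
  calc dist (gamC j z) (gamC j w)
      ≤ dist z w / ((z.re + 2) * (w.re + 2)) := dist_gamC_le_div h₁ h₂ hz (by linarith)
    _ ≤ dist z w / 2 := by gcongr
    _ = 1 / 2 * dist z w := by ring

theorem branches_contract_general (A : Finset ℕ) (hA1 : ∀ a ∈ A, 1 ≤ a) {z : ℂ}
    (hz : Metric.infDist z (IAC A) < 1) {j : ℕ × ℕ} (hj : j ∈ A ×ˢ A) :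
    Metric.infDist (gamC j z) (IAC A) ≤ 1 / 2 * Metric.infDist z (IAC A) := by
  obtain hI | hI := (IAC A).eq_empty_or_nonempty
  · simp [hI]
  obtain ⟨hj₁, hj₂⟩ := Finset.mem_product.mp hj
  exact infDist_map_le_mul_infDist hI (gamC_mapsTo_IAC hA1 hj) hz fun w hw hzw ↦
    dist_gamC_le_half (hA1 _ hj₁) (hA1 _ hj₂) (re_nonneg_of_mem_IAC hA1 hw) hzw

/-- **Uniform contraction of the inverse branches near `I` (Lemma `contracting`).**
There are `r > 0` and `0 < κ < 1` such that for every `z` in the closed upper half-plane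
with Euclidean distance `d_E(z, I) < r` and every `j = (a,a') ∈ A×A`,
`d_E(γ_j(z), I) ≤ κ · d_E(z, I)`. -/
theorem branches_contract (A : Finset ℕ) (hA : 2 ≤ A.card) (hA1 : ∀ a ∈ A, 1 ≤ a) :
    ∃ r κ : ℝ, 0 < r ∧ 0 < κ ∧ κ < 1 ∧
      ∀ z : ℂ, 0 ≤ z.im → Metric.infDist z (IAC A) < r →
        ∀ j ∈ (A ×ˢ A : Finset (ℕ × ℕ)),
          Metric.infDist (gamC j z) (IAC A) ≤ κ * Metric.infDist z (IAC A) :=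
  ⟨1, 1 / 2, one_pos, one_half_pos, one_half_lt_one,
    fun _ _ hz _ hj ↦ branches_contract_general A hA1 hz hj⟩
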